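/- For all functions Q, Q_k : S×A → ℝ, the second moment of the stochastic gradient satisfies Σ_{(s,a,s')} d(s,a)·P s a s' · ‖g(Q; Q_k, (s,a,s'))‖₂² ≤ 12γ²·|S|·|A|·‖Q* − Q_k‖_∞² + 8·‖∇F_{𝒯Q_k}(Q)‖_{D⁻¹}² + 18·|S|·|A|/(1−γ)². -/

import Mathlib

open MeasureTheory ProbabilityTheory Finset

/-- sup norm of a real function on a finite nonempty type. -/
noncomputable def supNorm {ι : Type*} [Fintype ι] [Nonempty ι] (f : ι → ℝ) : ℝ :=
  Finset.univ.sup' Finset.univ_nonempty (fun i => |f i|)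

/-- squared Euclidean norm of a real function on a finite type. -/
def sqNorm {ι : Type*} [Fintype ι] (f : ι → ℝ) : ℝ := ∑ i, (f i) ^ 2

/-- Bellman optimality operator. -/
noncomputable def bellman {S A : Type*} [Fintype S] [Fintype A] [Nonempty A]
    (P : S → A → S → ℝ) (r : S → A → ℝ) (γ : ℝ) (Q : S × A → ℝ) : S × A → ℝ :=
  fun x => r x.1 x.2 + γ * ∑ s' : S, P x.1 x.2 s' *
    Finset.univ.sup' Finset.univ_nonempty (fun a' => Q (s', a'))


/-- Stochastic gradient for sample `(s,a,s')`: zero except at coordinate `(s,a)`,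
where it takes the value `Q(s,a) - r(s,a) - γ·max_{a'} Qk(s',a')`. -/
noncomputable def sgrad {S A : Type*} [Fintype A] [Nonempty A] [DecidableEq S] [DecidableEq A]
    (r : S → A → ℝ) (γ : ℝ) (Q Qk : S × A → ℝ) (smp : S × A × S) : S × A → ℝ :=
  fun x => if x = (smp.1, smp.2.1) then
      Q (smp.1, smp.2.1) - r smp.1 smp.2.1
        - γ * Finset.univ.sup' Finset.univ_nonempty (fun a' => Qk (smp.2.2, a'))
    else 0

/-- squared `D`-weighted norm. -/
def DnormSq {S A : Type*} [Fintype S] [Fintype A] (d : S × A → ℝ) (f : S × A → ℝ) : ℝ :=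
  ∑ x, d x * (f x) ^ 2

theorem aux_abs_le_supNorm {ι : Type*} [Fintype ι] [Nonempty ι] (f : ι → ℝ) (i : ι) :
    |f i| ≤ supNorm f :=
  Finset.le_sup' (fun i => |f i|) (Finset.mem_univ i)

theorem aux_abs_sup_le {A : Type*} [Fintype A] [Nonempty A] (f : A → ℝ) (B : ℝ)
    (h : ∀ a, |f a| ≤ B) : |Finset.univ.sup' Finset.univ_nonempty f| ≤ B := by
  obtain ⟨a, -, ha⟩ := Finset.exists_mem_eq_sup' Finset.univ_nonempty f
  rw [ha]
  exact h a

theorem aux_sqNorm_sgrad {S A : Type*} [Fintype S] [Fintype A] [Nonempty A]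
    [DecidableEq S] [DecidableEq A] (r : S → A → ℝ) (γ : ℝ) (Q Qk : S × A → ℝ)
    (smp : S × A × S) :
    sqNorm (sgrad r γ Q Qk smp) = (Q (smp.1, smp.2.1) - r smp.1 smp.2.1
        - γ * Finset.univ.sup' Finset.univ_nonempty (fun a' => Qk (smp.2.2, a'))) ^ 2 := by
  unfold sqNorm sgrad
  rw [Finset.sum_eq_single (smp.1, smp.2.1)]
  · simp
  · intro b _ hb
    simp [hb]
  · simp

theorem aux_Qstar_le {S A : Type*} [Fintype S] [Fintype A] [Nonempty S] [Nonempty A]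
    (P : S → A → S → ℝ) (hP0 : ∀ s a s', 0 ≤ P s a s') (hP1 : ∀ s a, ∑ s', P s a s' = 1)
    (r : S → A → ℝ) (hr : ∀ s a, |r s a| ≤ 1)
    (γ : ℝ) (hγ : γ ∈ Set.Ioo (0 : ℝ) 1)
    (Qstar : S × A → ℝ) (hQstar : bellman P r γ Qstar = Qstar) :
    supNorm Qstar ≤ 1 / (1 - γ) := by
  obtain ⟨h0, h1⟩ := hγ
  have key : supNorm Qstar ≤ 1 + γ * supNorm Qstar := by
    refine Finset.sup'_le _ _ ?_
    intro x _
    have hx := congrFun hQstar x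
    have hsum : |∑ s' : S, P x.1 x.2 s' *
        Finset.univ.sup' Finset.univ_nonempty (fun a' => Qstar (s', a'))| ≤ supNorm Qstar := by
      calc _ ≤ ∑ s' : S, |P x.1 x.2 s' *
            Finset.univ.sup' Finset.univ_nonempty (fun a' => Qstar (s', a'))| :=
            Finset.abs_sum_le_sum_abs _ _
        _ ≤ ∑ s' : S, P x.1 x.2 s' * supNorm Qstar := by
            refine Finset.sum_le_sum fun s' _ => ?_
            rw [abs_mul, abs_of_nonneg (hP0 _ _ _)]
            exact mul_le_mul_of_nonneg_left
              (aux_abs_sup_le _ _ fun a => aux_abs_le_supNorm _ _) (hP0 _ _ _)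
        _ = supNorm Qstar := by rw [← Finset.sum_mul, hP1, one_mul]
    rw [← hx]
    unfold bellman
    refine (abs_add_le _ _).trans (add_le_add (hr _ _) ?_)
    rw [abs_mul, abs_of_pos h0]
    exact mul_le_mul_of_nonneg_left hsum h0.le
  rw [le_div_iff₀ (by linarith)]
  linarith

theorem aux_var {S : Type*} [Fintype S] (p M : S → ℝ) (hp : ∀ s, 0 ≤ p s) (h1 : ∑ s, p s = 1)
    (B a γ : ℝ) (hM : ∀ s, |M s| ≤ B) :
    ∑ s, p s * (a - γ * M s) ^ 2 ≤ (a - γ * ∑ s, p s * M s) ^ 2 + γ ^ 2 * B ^ 2 := by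
  have hE : ∑ s, p s * M s ^ 2 ≤ B ^ 2 := by
    calc _ ≤ ∑ s, p s * B ^ 2 := by
          refine Finset.sum_le_sum fun s _ => mul_le_mul_of_nonneg_left ?_ (hp s)
          exact sq_le_sq' (abs_le.1 (hM s)).1 (abs_le.1 (hM s)).2
      _ = B ^ 2 := by rw [← Finset.sum_mul, h1, one_mul]
  have hs : ∑ s, p s * (a - γ * M s) ^ 2
      = a ^ 2 * ∑ s, p s - 2 * a * γ * ∑ s, p s * M s + γ ^ 2 * ∑ s, p s * M s ^ 2 := by
    simp only [Finset.mul_sum]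
    rw [← Finset.sum_sub_distrib, ← Finset.sum_add_distrib]
    exact Finset.sum_congr rfl fun s _ => by ring
  rw [hs, h1]
  nlinarith [mul_le_mul_of_nonneg_left hE (sq_nonneg γ), sq_nonneg (γ * ∑ s, p s * M s)]

theorem sgrad_second_moment_bound
    {S A : Type*} [Fintype S] [Fintype A] [Nonempty S] [Nonempty A]
    [DecidableEq S] [DecidableEq A]
    (P : S → A → S → ℝ) (hP0 : ∀ s a s', 0 ≤ P s a s') (hP1 : ∀ s a, ∑ s', P s a s' = 1)
    (r : S → A → ℝ) (hr : ∀ s a, |r s a| ≤ 1)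
    (γ : ℝ) (hγ : γ ∈ Set.Ioo (0 : ℝ) 1)
    (Qstar : S × A → ℝ) (hQstar : bellman P r γ Qstar = Qstar)
    (d : S × A → ℝ) (hd0 : ∀ x, 0 < d x) (hd1 : ∑ x, d x = 1)
    (Q Qk : S × A → ℝ) :
    ∑ smp : S × A × S, d (smp.1, smp.2.1) * P smp.1 smp.2.1 smp.2.2 *
        sqNorm (sgrad r γ Q Qk smp) ≤
      12 * γ ^ 2 * (Fintype.card S : ℝ) * (Fintype.card A : ℝ) *
          (supNorm (fun x => Qstar x - Qk x)) ^ 2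
        + 8 * (∑ x, (d x * (Q x - bellman P r γ Qk x)) ^ 2 / d x)
        + 18 * (Fintype.card S : ℝ) * (Fintype.card A : ℝ) / (1 - γ) ^ 2 := by
  have hK := aux_Qstar_le P hP0 hP1 r hr γ hγ Qstar hQstar
  obtain ⟨h0, h1⟩ := hγ
  set ε := supNorm (fun x => Qstar x - Qk x) with hε
  set c : ℝ := 1 / (1 - γ) with hc
  have hM : ∀ s', |Finset.univ.sup' Finset.univ_nonempty (fun a' => Qk (s', a'))| ≤ ε + c := by
    intro s'
    refine aux_abs_sup_le _ _ fun a => ?_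
    have e1 := abs_le.1 (aux_abs_le_supNorm (fun x => Qstar x - Qk x) (s', a))
    have e2 := abs_le.1 ((aux_abs_le_supNorm Qstar (s', a)).trans hK)
    rw [← hε] at e1
    rw [abs_le]
    constructor <;> linarith [e1.1, e1.2, e2.1, e2.2]
  have hL : ∑ smp : S × A × S, d (smp.1, smp.2.1) * P smp.1 smp.2.1 smp.2.2 *
        sqNorm (sgrad r γ Q Qk smp) ≤
      ∑ x, (d x * (Q x - bellman P r γ Qk x)) ^ 2 / d x + γ ^ 2 * (ε + c) ^ 2 := by
    calc _ = ∑ x : S × A, d x * ∑ s', P x.1 x.2 s' * ((Q x - r x.1 x.2)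
            - γ * Finset.univ.sup' Finset.univ_nonempty (fun a' => Qk (s', a'))) ^ 2 := by
          simp only [aux_sqNorm_sgrad, Fintype.sum_prod_type, Finset.mul_sum, mul_assoc]
      _ ≤ ∑ x : S × A, d x * ((Q x - bellman P r γ Qk x) ^ 2 + γ ^ 2 * (ε + c) ^ 2) := by
          refine Finset.sum_le_sum fun x _ => mul_le_mul_of_nonneg_left ?_ (hd0 x).le
          have := aux_var (P x.1 x.2)
            (fun s' => Finset.univ.sup' Finset.univ_nonempty (fun a' => Qk (s', a')))
            (hP0 _ _) (hP1 _ _) (ε + c) (Q x - r x.1 x.2) γ hM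
          simp only [bellman, ← sub_sub]
          exact this
      _ = _ := by
          simp only [mul_add, Finset.sum_add_distrib]
          rw [← Finset.sum_mul, hd1, one_mul]
          congr 1
          refine Finset.sum_congr rfl fun x _ => ?_
          have := (hd0 x).ne'
          field_simp
  have hD : 0 ≤ ∑ x, (d x * (Q x - bellman P r γ Qk x)) ^ 2 / d x :=
    Finset.sum_nonneg fun x _ => div_nonneg (sq_nonneg _) (hd0 x).le
  have hSA : (1 : ℝ) ≤ (Fintype.card S : ℝ) * (Fintype.card A : ℝ) := by
    have := Nat.mul_pos (Fintype.card_pos (α := S)) (Fintype.card_pos (α := A))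
    exact_mod_cast this
  have hc2 : 18 * (Fintype.card S : ℝ) * (Fintype.card A : ℝ) / (1 - γ) ^ 2
      = 18 * ((Fintype.card S : ℝ) * (Fintype.card A : ℝ)) * c ^ 2 := by
    rw [hc, div_pow]; ring
  rw [hc2]
  generalize (∑ x, (d x * (Q x - bellman P r γ Qk x)) ^ 2 / d x) = X at *
  have hn1 : γ ^ 2 * ε ^ 2 ≤ ((Fintype.card S : ℝ) * (Fintype.card A : ℝ)) * (γ ^ 2 * ε ^ 2) :=
    le_mul_of_one_le_left (by positivity) hSA
  have hn2 : c ^ 2 ≤ ((Fintype.card S : ℝ) * (Fintype.card A : ℝ)) * c ^ 2 :=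
    le_mul_of_one_le_left (by positivity) hSA
  have hg : γ ^ 2 * c ^ 2 ≤ c ^ 2 :=
    mul_le_of_le_one_left (by positivity) (by nlinarith)
  have hq : γ ^ 2 * (ε + c) ^ 2 ≤ 2 * (γ ^ 2 * ε ^ 2) + 2 * (γ ^ 2 * c ^ 2) := by
    nlinarith [sq_nonneg (γ * (ε - c))]
  have p1 : 0 ≤ γ ^ 2 * ε ^ 2 := by positivity
  have p2 : 0 ≤ c ^ 2 := by positivity
  linarith
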